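/- If two entire functions of exponential type at most 1 have exactly the same zeros (with multiplicities) and their ratio tends to 1 along some ray to infinity, then the two functions are identically equal. -/

import Mathlib

open Complex Filter

/-
The quotient `q` of `f` and `g` is entire and zero-free. By Nevanlinna's first main theorem its
characteristic function is at most that of `f` plus that of `g` up to a constant, hence
`O(R ^ n)` when `f` and `g` have order `n`, and the Poisson formula turns this into an upper bound
for `log |q|`. So `q = exp p` with `Re p = O(|z| ^ n)`, and `p` is a polynomial by
Borel–Carathéodory and Liouville. If `exp p` converges to a nonzero limit along a ray, then `p`
itself converges there, because the fibres of `exp` are discrete; a polynomial that converges along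
a ray is constant.
-/

open Asymptotics Bornology Metric Polynomial ValueDistribution
open scoped Topology

lemma analyticOrderAt_eq_of_forall_iteratedDeriv_eq_zero_iff {𝕜 E : Type*}
    [NontriviallyNormedField 𝕜] [CharZero 𝕜] [NormedAddCommGroup E] [NormedSpace 𝕜 E]
    [CompleteSpace E] {f g : 𝕜 → E} {z : 𝕜} (hf : AnalyticAt 𝕜 f z) (hg : AnalyticAt 𝕜 g z)
    (h : ∀ n : ℕ, (∀ k ≤ n, iteratedDeriv k f z = 0) ↔ ∀ k ≤ n, iteratedDeriv k g z = 0) :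
    analyticOrderAt f z = analyticOrderAt g z := by
  refine ENat.eq_of_forall_natCast_le_iff fun n => ?_
  rw [natCast_le_analyticOrderAt_iff_iteratedDeriv_eq_zero hf,
    natCast_le_analyticOrderAt_iff_iteratedDeriv_eq_zero hg]
  cases n with
  | zero => simp
  | succ n => simpa only [Nat.lt_succ_iff] using h n

lemma exists_analyticOnNhd_eqOn_mul_of_analyticOrderAt_eq {𝕜 : Type*} [NontriviallyNormedField 𝕜]
    [CompleteSpace 𝕜] {f g : 𝕜 → 𝕜} {U : Set 𝕜} (hf : AnalyticOnNhd 𝕜 f U)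
    (hg : AnalyticOnNhd 𝕜 g U)
    (hord : ∀ z ∈ U, analyticOrderAt f z = analyticOrderAt g z)
    (hfin : ∀ z ∈ U, analyticOrderAt g z ≠ ⊤) :
    ∃ q : 𝕜 → 𝕜, AnalyticOnNhd 𝕜 q U ∧ (∀ z ∈ U, q z ≠ 0) ∧ U.EqOn f (q * g) := by
  have hmer : MeromorphicOn (f / g) U := hf.meromorphicOn.div hg.meromorphicOn
  have hNF : MeromorphicNFOn (toMeromorphicNFOn (f / g) U) U :=
    meromorphicNFOn_toMeromorphicNFOn _ _
  have hzero : ∀ z ∈ U, meromorphicOrderAt (toMeromorphicNFOn (f / g) U) z = 0 := fun z hz => by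
    rw [meromorphicOrderAt_toMeromorphicNFOn hmer hz,
      meromorphicOrderAt_div (hf z hz).meromorphicAt (hg z hz).meromorphicAt,
      (hf z hz).meromorphicOrderAt_eq, (hg z hz).meromorphicOrderAt_eq, hord z hz]
    lift analyticOrderAt g z to ℕ using hfin z hz with n
    simp only [ENat.map_natCast]
    exact_mod_cast sub_self (n : ℤ)
  have hana : AnalyticOnNhd 𝕜 (toMeromorphicNFOn (f / g) U) U := fun z hz =>
    (hNF hz).meromorphicOrderAt_nonneg_iff_analyticAt.mp (hzero z hz).ge
  refine ⟨_, hana, fun z hz => (hNF hz).meromorphicOrderAt_eq_zero_iff.mp (hzero z hz),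
    fun z hz => ?_⟩
  have hg_ne : ∀ᶠ w in 𝓝[≠] z, g w ≠ 0 :=
    (hg z hz).eventually_eq_zero_or_eventually_ne_zero.resolve_left
      (mt analyticOrderAt_eq_top.mpr (hfin z hz))
  have hpunctured : f =ᶠ[𝓝[≠] z] toMeromorphicNFOn (f / g) U * g := by
    filter_upwards [hg_ne, hmer.toMeromorphicNFOn_eq_self_on_nhdsNE hz] with w hw hq
    rw [Pi.mul_apply, hq, Pi.div_apply, div_mul_cancel₀ _ hw]
  exact (((hf z hz).continuousAt.eventuallyEq_nhds_iff_eventuallyEq_nhdsNE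
    ((hana z hz).mul (hg z hz)).continuousAt).mp hpunctured).self_of_nhds

lemma analyticOrderAt_ne_top_of_ne_zero {E : Type*} [NormedAddCommGroup E] [NormedSpace ℂ E]
    [CompleteSpace E] {g : ℂ → E} (hg : Differentiable ℂ g) (hg0 : g ≠ 0) (z : ℂ) :
    analyticOrderAt g z ≠ ⊤ := fun htop =>
  hg0 <| AnalyticOnNhd.eq_of_eventuallyEq (fun x _ => hg.analyticAt x)
    (fun _ _ => analyticAt_const) (analyticOrderAt_eq_top.mp htop)

lemma exists_differentiable_exp_eq {q : ℂ → ℂ} (hq : Differentiable ℂ q) (hq0 : ∀ z, q z ≠ 0) :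
    ∃ h : ℂ → ℂ, Differentiable ℂ h ∧ ∀ z, Complex.exp (h z) = q z := by
  obtain ⟨F, hF, hFre⟩ := InnerProductSpace.HarmonicOnNhd.exists_analyticOnNhd_univ_re_eq
    (f := fun z => Real.log ‖q z‖) fun z _ => (hq.analyticAt z).harmonicAt_log_norm (hq0 z)
  have hFd : Differentiable ℂ F := fun z => (hF z trivial).differentiableAt
  have hnorm : ∀ z, ‖q z * Complex.exp (-F z)‖ = 1 := fun z => by
    rw [norm_mul, Complex.norm_exp, neg_re, congrFun hFre z, Real.exp_neg,
      Real.exp_log (norm_pos_iff.mpr (hq0 z)), mul_inv_cancel₀ (norm_ne_zero_iff.mpr (hq0 z))]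
  obtain ⟨c, hc⟩ := (hq.mul hFd.neg.cexp).exists_const_forall_eq_of_bounded
    (isBounded_iff_forall_norm_le.mpr ⟨1, by rintro _ ⟨z, rfl⟩; exact (hnorm z).le⟩)
  have hc0 : c ≠ 0 := hc 0 ▸ mul_ne_zero (hq0 0) (Complex.exp_ne_zero _)
  refine ⟨fun z => Complex.log c + F z, hFd.const_add _, fun z => ?_⟩
  rw [Complex.exp_add, Complex.exp_log hc0, ← hc z]
  simp [mul_assoc, ← Complex.exp_add]

lemma iteratedDeriv_eq_zero_of_isBigO_cobounded {E : Type*} [NormedAddCommGroup E]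
    [NormedSpace ℂ E] [CompleteSpace E] {h : ℂ → E} (hh : Differentiable ℂ h) {n k : ℕ}
    (hnk : n < k) (hO : h =O[cobounded ℂ] fun z => ‖z‖ ^ n) (c : ℂ) :
    iteratedDeriv k h c = 0 := by
  obtain ⟨K, hK, hO⟩ := hO.exists_pos
  obtain ⟨R₀, -, hR₀⟩ := hasBasis_cobounded_norm.eventually_iff.mp hO.bound
  have hbound : ∀ z, R₀ ≤ ‖z‖ → ‖h z‖ ≤ K * ‖z‖ ^ n := fun z hz => by simpa using hR₀ hz
  have hcauchy : ∀ᶠ R : ℝ in atTop,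
      ‖iteratedDeriv k h c‖ ≤ k.factorial * (K * 2 ^ n) * (R ^ n / R ^ k) := by
    filter_upwards [eventually_gt_atTop 0, eventually_ge_atTop ‖c‖,
      eventually_ge_atTop (R₀ + ‖c‖)] with R hR hcR hR₀R
    have hsphere : ∀ z ∈ sphere c R, ‖h z‖ ≤ K * (2 * R) ^ n := fun z hz => by
      rw [mem_sphere_iff_norm] at hz
      refine (hbound z (by linarith [norm_sub_le z c])).trans ?_
      gcongr
      linarith [norm_le_norm_add_norm_sub' z c]
    refine (norm_iteratedDeriv_le_of_forall_mem_sphere_norm_le k hR hh.diffContOnCl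
      hsphere).trans_eq ?_
    ring
  have hlim := (tendsto_pow_div_pow_atTop_zero (𝕜 := ℝ) hnk).const_mul
    (k.factorial * (K * 2 ^ n))
  rw [mul_zero] at hlim
  exact norm_le_zero_iff.mp (ge_of_tendsto hlim hcauchy)

lemma exists_polynomial_eq_of_isBigO_cobounded {h : ℂ → ℂ} (hh : Differentiable ℂ h) {n : ℕ}
    (hO : h =O[cobounded ℂ] fun z => ‖z‖ ^ n) :
    ∃ p : ℂ[X], p.natDegree ≤ n ∧ ∀ z, h z = p.eval z := by
  refine ⟨∑ k ∈ Finset.range (n + 1), C ((k.factorial : ℂ)⁻¹ * iteratedDeriv k h 0) * X ^ k,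
    natDegree_sum_le_of_forall_le _ _ fun k hk =>
      (natDegree_C_mul_X_pow_le _ _).trans (Finset.mem_range_succ_iff.mp hk), fun z => ?_⟩
  rw [← taylorSeries_eq_of_entire' 0 z hh, tsum_eq_sum (s := Finset.range (n + 1)) fun k hk => by
    rw [iteratedDeriv_eq_zero_of_isBigO_cobounded hh (by simpa using hk) hO, mul_zero, zero_mul]]
  simp [eval_finsetSum]

lemma isBigO_cobounded_of_re_le {h : ℂ → ℂ} (hh : Differentiable ℂ h) {n : ℕ} {M : ℝ → ℝ}
    (hM : M =O[atTop] fun R : ℝ => R ^ n)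
    (hre : ∀ᶠ R in atTop, ∀ z ∈ ball (0 : ℂ) R, (h z).re ≤ M R) :
    h =O[cobounded ℂ] fun z => ‖z‖ ^ n := by
  obtain ⟨K, hK, hM⟩ := hM.exists_pos
  have hdouble : Tendsto (fun z : ℂ => 2 * ‖z‖) (cobounded ℂ) atTop :=
    tendsto_norm_cobounded_atTop.const_mul_atTop two_pos
  refine .of_bound (2 ^ (n + 1) * K + 3 * ‖h 0‖) ?_
  filter_upwards [hdouble.eventually hre, hdouble.eventually hM.bound,
    tendsto_norm_cobounded_atTop.eventually_ge_atTop 1] with z hre hM hz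
  have hz0 : ‖z‖ ≠ 0 := by positivity
  have hmaps : Set.MapsTo h (ball 0 (2 * ‖z‖)) {w | w.re ≤ K * (2 * ‖z‖) ^ n} := fun w hw =>
    (hre w hw).trans ((le_abs_self _).trans (by simpa using hM))
  calc ‖h z‖
      ≤ 2 * (K * (2 * ‖z‖) ^ n) * ‖z‖ / (2 * ‖z‖ - ‖z‖)
          + ‖h 0‖ * (2 * ‖z‖ + ‖z‖) / (2 * ‖z‖ - ‖z‖) :=
        borelCaratheodory (by positivity) hh.differentiableOn hmaps (by positivity)
          (mem_ball_zero_iff.mpr (by linarith))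
    _ = 2 ^ (n + 1) * K * ‖z‖ ^ n + 3 * ‖h 0‖ * 1 := by
        rw [two_mul ‖z‖, add_sub_cancel_right, ← two_mul]
        field_simp
        ring
    _ ≤ 2 ^ (n + 1) * K * ‖z‖ ^ n + 3 * ‖h 0‖ * ‖z‖ ^ n := by
        gcongr
        exact one_le_pow₀ hz
    _ = (2 ^ (n + 1) * K + 3 * ‖h 0‖) * ‖‖z‖ ^ n‖ := by
        rw [norm_pow, norm_norm]
        ring

lemma harmonicOnNhd_le_mul_circleAverage_max {u : ℂ → ℝ} {c w : ℂ} {R : ℝ}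
    (hu : InnerProductSpace.HarmonicOnNhd u (closedBall c R)) (hw : w ∈ ball c R) :
    u w ≤ (R + ‖w - c‖) / (R - ‖w - c‖) * Real.circleAverage (fun z => max 0 (u z)) c R := by
  have hR : |R| = R := abs_of_pos (pos_of_mem_ball hw)
  have hu_cont : ContinuousOn u (sphere c |R|) := fun z hz =>
    (hu z (sphere_subset_closedBall (hR ▸ hz))).1.continuousAt.continuousWithinAt
  have hkernel_cont : ContinuousOn (re ∘ herglotzRieszKernel c w) (sphere c |R|) :=
    continuous_re.comp_continuousOn (continuousOn_herglotzRieszKernel_sphere hw)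
  have hmax_int : CircleIntegrable (fun z => max 0 (u z)) c R :=
    (continuousOn_const.sup hu_cont).circleIntegrable'
  rw [← hu.circleAverage_re_herglotzRieszKernel_smul hw, ← smul_eq_mul,
    ← Real.circleAverage_fun_smul]
  refine Real.circleAverage_mono (hkernel_cont.smul hu_cont).circleIntegrable'
    (hmax_int.const_smul) fun z hz => ?_
  rw [hR] at hz
  have hkernel_nonneg : 0 ≤ (herglotzRieszKernel c w z).re := by
    refine le_trans ?_ (le_re_herglotzRieszKernel hz hw)
    have hwR : ‖w - c‖ < R := mem_ball_iff_norm.mp hw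
    exact div_nonneg (sub_nonneg.mpr hwR.le) (by linarith [norm_nonneg (w - c)])
  exact (mul_le_mul_of_nonneg_left (le_max_right 0 (u z)) hkernel_nonneg).trans
    (mul_le_mul_of_nonneg_right (re_herglotzRieszKernel_le hz hw) (le_max_left 0 (u z)))

lemma characteristic_top_eq_proximity_of_analyticOnNhd {E : Type*} [NormedAddCommGroup E]
    [NormedSpace ℂ E] {f : ℂ → E} (hf : AnalyticOnNhd ℂ f Set.univ) :
    characteristic f ⊤ = proximity f ⊤ := by
  have hdivisor : (MeromorphicOn.divisor f Set.univ)⁻ = 0 :=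
    negPart_eq_zero.mpr (MeromorphicOn.AnalyticOnNhd.divisor_nonneg hf)
  rw [characteristic, logCounting_top, hdivisor, map_zero, add_zero]

lemma log_norm_le_mul_characteristic {q : ℂ → ℂ} (hq : Differentiable ℂ q) (hq0 : ∀ z, q z ≠ 0)
    {w : ℂ} {R : ℝ} (hw : w ∈ ball 0 R) :
    Real.log ‖q w‖ ≤ (R + ‖w‖) / (R - ‖w‖) * characteristic q ⊤ R := by
  have hharm : InnerProductSpace.HarmonicOnNhd (fun z => Real.log ‖q z‖) (closedBall 0 R) :=
    fun z _ => (hq.analyticAt z).harmonicAt_log_norm (hq0 z)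
  rw [characteristic_top_eq_proximity_of_analyticOnNhd fun z _ => hq.analyticAt z, proximity_top]
  simpa only [sub_zero] using! harmonicOnNhd_le_mul_circleAverage_max hharm hw

lemma isBigO_characteristic_top_of_norm_le {E : Type*} [NormedAddCommGroup E] [NormedSpace ℂ E]
    [CompleteSpace E] {f : ℂ → E} (hf : Differentiable ℂ f) {n : ℕ}
    (hgrowth : ∃ C A : ℝ, ∀ z, ‖f z‖ ≤ C * Real.exp (A * ‖z‖ ^ n)) :
    characteristic f ⊤ =O[atTop] fun R : ℝ => R ^ n := by
  obtain ⟨C, A, hCA⟩ := hgrowth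
  have hf_ana : AnalyticOnNhd ℂ f Set.univ := fun z _ => hf.analyticAt z
  rw [characteristic_top_eq_proximity_of_analyticOnNhd hf_ana]
  refine .of_bound (C.posLog + |A|) ?_
  filter_upwards [eventually_ge_atTop 1] with R hR
  have hR0 : 0 ≤ R := zero_le_one.trans hR
  rw [Real.norm_of_nonneg (proximity_nonneg R), Real.norm_of_nonneg (by positivity), proximity_top]
  refine Real.circleAverage_mono_on_of_le_circle
    (hf_ana.meromorphicOn.mono_set (Set.subset_univ _)).circleIntegrable_posLog_norm fun z hz => ?_
  have hzR : ‖z‖ = R := by simpa [abs_of_nonneg hR0] using hz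
  calc ‖f z‖.posLog
      ≤ (C * Real.exp (A * R ^ n)).posLog :=
        Real.posLog_le_posLog (norm_nonneg _) (hzR ▸ hCA z)
    _ ≤ C.posLog + (Real.exp (A * R ^ n)).posLog := Real.posLog_mul
    _ = C.posLog + max 0 (A * R ^ n) := by
        rw [Real.posLog_apply (x := Real.exp _), Real.log_exp]
    _ ≤ C.posLog * R ^ n + |A| * R ^ n := by
        refine add_le_add (le_mul_of_one_le_right Real.posLog_nonneg (one_le_pow₀ hR))
          (max_le (by positivity) ?_)
        gcongr
        exact le_abs_self A
    _ = (C.posLog + |A|) * R ^ n := by ring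

lemma isBigO_characteristic_inv_top {g : ℂ → ℂ} (hg : Meromorphic g) {φ : ℝ → ℝ}
    (hφ : (1 : ℝ → ℝ) =O[atTop] φ) (hO : characteristic g ⊤ =O[atTop] φ) :
    characteristic g⁻¹ ⊤ =O[atTop] φ := by
  simpa using hO.sub ((isBigO_characteristic_sub_characteristic_inv hg).trans hφ)

lemma isBigO_characteristic_mul_top {f g : ℂ → ℂ} (hf : Meromorphic f)
    (hf_ord : ∀ z, meromorphicOrderAt f z ≠ ⊤) (hg : Meromorphic g)
    (hg_ord : ∀ z, meromorphicOrderAt g z ≠ ⊤) {φ : ℝ → ℝ}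
    (hfO : characteristic f ⊤ =O[atTop] φ) (hgO : characteristic g ⊤ =O[atTop] φ) :
    characteristic (f * g) ⊤ =O[atTop] φ := by
  refine IsBigO.trans (.of_bound 1 ?_) (hfO.add hgO)
  filter_upwards [characteristic_eventually_nonneg (f := f * g) (a := ⊤),
    characteristic_mul_top_eventuallyLE hf hf_ord hg hg_ord] with R hnonneg hle
  rw [Real.norm_of_nonneg hnonneg, one_mul]
  exact hle.trans (Real.le_norm_self _)

lemma isBigO_characteristic_top_of_eq_mul {f g q : ℂ → ℂ} (hf : Meromorphic f)
    (hf_ord : ∀ z, meromorphicOrderAt f z ≠ ⊤) (hg : Meromorphic g)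
    (hg_ord : ∀ z, meromorphicOrderAt g z ≠ ⊤) (hq : f = q * g) {φ : ℝ → ℝ}
    (hφ : (1 : ℝ → ℝ) =O[atTop] φ) (hfO : characteristic f ⊤ =O[atTop] φ)
    (hgO : characteristic g ⊤ =O[atTop] φ) : characteristic q ⊤ =O[atTop] φ := by
  have hquot : f * g⁻¹ =ᶠ[codiscrete ℂ] q := by
    filter_upwards [hg.meromorphicOn.eventually_codiscreteWithin_apply_ne_zero
      fun z _ => hg_ord z] with z hz
    rw [hq, Pi.mul_apply, Pi.mul_apply, Pi.inv_apply, mul_inv_cancel_right₀ hz]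
  have hinv : ∀ z, meromorphicOrderAt g⁻¹ z ≠ ⊤ := fun z => by
    simpa only [meromorphicOrderAt_inv, ne_eq, LinearOrderedAddCommGroupWithTop.neg_eq_top]
      using hg_ord z
  refine (isBigO_characteristic_mul_top hf hf_ord hg.inv hinv hfO
    (isBigO_characteristic_inv_top hg hφ hgO)).congr' ?_ .rfl
  filter_upwards [eventually_ne_atTop 0] with R hR using characteristic_congr_codiscrete hquot hR

lemma exists_polynomial_eq_exp_of_isBigO_characteristic {q : ℂ → ℂ} (hq : Differentiable ℂ q)
    (hq0 : ∀ z, q z ≠ 0) {n : ℕ} (hO : characteristic q ⊤ =O[atTop] fun R : ℝ => R ^ n) :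
    ∃ p : ℂ[X], p.natDegree ≤ n ∧ ∀ z, q z = Complex.exp (p.eval z) := by
  obtain ⟨h, hh, hexp⟩ := exists_differentiable_exp_eq hq hq0
  have hdouble : (fun R => 3 * characteristic q ⊤ (2 * R)) =O[atTop] fun R : ℝ => R ^ n := by
    refine ((hO.comp_tendsto (tendsto_id.const_mul_atTop two_pos)).const_mul_left 3).trans ?_
    simpa only [Function.comp_def, id, mul_pow] using (isBigO_refl _ _).const_mul_left _
  have hre : ∀ᶠ R : ℝ in atTop, ∀ z ∈ ball (0 : ℂ) R,
      (h z).re ≤ 3 * characteristic q ⊤ (2 * R) := by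
    filter_upwards [eventually_ge_atTop 1] with R hR z hz
    rw [mem_ball_zero_iff] at hz
    calc (h z).re
        = Real.log ‖q z‖ := by rw [← hexp, norm_exp, Real.log_exp]
      _ ≤ (2 * R + ‖z‖) / (2 * R - ‖z‖) * characteristic q ⊤ (2 * R) :=
          log_norm_le_mul_characteristic hq hq0 (mem_ball_zero_iff.mpr (by linarith))
      _ ≤ 3 * characteristic q ⊤ (2 * R) := by
          refine mul_le_mul_of_nonneg_right ?_ (characteristic_nonneg (by linarith))
          rw [div_le_iff₀ (by linarith)]
          linarith
  obtain ⟨p, hp, hhp⟩ :=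
    exists_polynomial_eq_of_isBigO_cobounded hh (isBigO_cobounded_of_re_le hh hdouble hre)
  exact ⟨p, hp, fun z => by rw [← hhp, hexp]⟩

lemma exists_polynomial_eq_exp_mul {f g : ℂ → ℂ} (hf : Differentiable ℂ f)
    (hg : Differentiable ℂ g) (hg0 : g ≠ 0) {n : ℕ}
    (hf_growth : ∃ C A : ℝ, ∀ z, ‖f z‖ ≤ C * Real.exp (A * ‖z‖ ^ n))
    (hg_growth : ∃ C A : ℝ, ∀ z, ‖g z‖ ≤ C * Real.exp (A * ‖z‖ ^ n))
    (hord : ∀ z, analyticOrderAt f z = analyticOrderAt g z) :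
    ∃ p : ℂ[X], p.natDegree ≤ n ∧ ∀ z, f z = Complex.exp (p.eval z) * g z := by
  have hg_fin : ∀ z, analyticOrderAt g z ≠ ⊤ := analyticOrderAt_ne_top_of_ne_zero hg hg0
  have hf_ord : ∀ z, meromorphicOrderAt f z ≠ ⊤ := fun z => by
    simpa [(hf.analyticAt z).meromorphicOrderAt_eq, hord z] using hg_fin z
  have hg_ord : ∀ z, meromorphicOrderAt g z ≠ ⊤ := fun z => by
    simpa [(hg.analyticAt z).meromorphicOrderAt_eq] using hg_fin z
  obtain ⟨q, hq, hq0, hfq⟩ := exists_analyticOnNhd_eqOn_mul_of_analyticOrderAt_eq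
    (U := Set.univ) (fun z _ => hf.analyticAt z) (fun z _ => hg.analyticAt z)
    (fun z _ => hord z) (fun z _ => hg_fin z)
  have hone : (1 : ℝ → ℝ) =O[atTop] fun R : ℝ => R ^ n := by
    simpa using! IsBigO.pow_of_le_right (f := id) (eventually_ge_atTop 1) n.zero_le
  obtain ⟨p, hp, hqp⟩ := exists_polynomial_eq_exp_of_isBigO_characteristic
    (fun z => (hq z trivial).differentiableAt) (fun z => hq0 z trivial)
    (isBigO_characteristic_top_of_eq_mul (fun z => (hf.analyticAt z).meromorphicAt) hf_ord
      (fun z => (hg.analyticAt z).meromorphicAt) hg_ord ((Set.eqOn_univ _ _).mp hfq) hone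
      (isBigO_characteristic_top_of_norm_le hf hf_growth)
      (isBigO_characteristic_top_of_norm_le hg hg_growth))
  exact ⟨p, hp, fun z => by rw [hfq trivial, Pi.mul_apply, hqp]⟩

lemma exists_tendsto_of_tendsto_exp {φ : ℝ → ℂ} (hφ : Continuous φ) {c : ℂ} (hc : c ≠ 0)
    (h : Tendsto (fun r => Complex.exp (φ r)) atTop (𝓝 c)) : ∃ L, Tendsto φ atTop (𝓝 L) := by
  have hratio : Tendsto (fun r => Complex.exp (φ r) / c) atTop (𝓝 1) := by
    simpa only [div_self hc] using h.div_const c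
  obtain ⟨r₀, hr₀⟩ := eventually_atTop.mp (hratio.eventually_mem
    (isOpen_slitPlane.mem_nhds one_mem_slitPlane))
  -- `exp d = c`, so the continuous function `d` takes values in a discrete fibre.
  let d : ℝ → ℂ := fun r => φ r - Complex.log (Complex.exp (φ r) / c)
  have hd_fiber : Set.MapsTo d (Set.Ici r₀) (Complex.exp ⁻¹' {c}) := fun r hr => by
    simp [d, Complex.exp_sub, Complex.exp_log (slitPlane_ne_zero (hr₀ r hr))]
  have hd_cont : ContinuousOn d (Set.Ici r₀) := hφ.continuousOn.sub
    (ContinuousOn.clog (by fun_prop) hr₀)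
  have hd_const : ∀ r ≥ r₀, d r = d r₀ := fun r hr => isPreconnected_Ici.constant_of_mapsTo
    ⟨(isCoveringMapOn_exp c hc).1⟩ hd_cont hd_fiber hr Set.self_mem_Ici
  have hlog : Tendsto (fun r => Complex.log (Complex.exp (φ r) / c)) atTop (𝓝 0) := by
    simpa using hratio.clog one_mem_slitPlane
  refine ⟨d r₀ + 0, (hlog.const_add _).congr' ?_⟩
  filter_upwards [eventually_ge_atTop r₀] with r hr
  rw [← hd_const r hr, sub_add_cancel]

lemma natDegree_eq_zero_of_tendsto_exp_eval {p : ℂ[X]} {u c : ℂ} (hu : u ≠ 0) (hc : c ≠ 0)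
    (h : Tendsto (fun r : ℝ => Complex.exp (p.eval (r * u))) atTop (𝓝 c)) : p.natDegree = 0 := by
  by_contra hp
  obtain ⟨L, hL⟩ := exists_tendsto_of_tendsto_exp (by fun_prop) hc h
  have hray : Tendsto (fun r : ℝ => ‖(r : ℂ) * u‖) atTop atTop := by
    simpa using tendsto_abs_atTop_atTop.atTop_mul_const (norm_pos_iff.mpr hu)
  exact not_tendsto_nhds_of_tendsto_atTop
    (p.tendsto_norm_atTop (natDegree_pos_iff_degree_pos.mp (Nat.pos_of_ne_zero hp)) hray) _ hL.norm

theorem stmt0_general (f g : ℂ → ℂ) (n : ℕ)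
    (hf : Differentiable ℂ f) (hg : Differentiable ℂ g) (hg0 : g ≠ 0)
    (hftype : ∃ C A : ℝ, ∀ z : ℂ, ‖f z‖ ≤ C * Real.exp (A * ‖z‖ ^ n))
    (hgtype : ∃ C A : ℝ, ∀ z : ℂ, ‖g z‖ ≤ C * Real.exp (A * ‖z‖ ^ n))
    (hzeros : ∀ z : ℂ, ∀ m : ℕ,
      ((∀ k ≤ m, iteratedDeriv k f z = 0) ↔ (∀ k ≤ m, iteratedDeriv k g z = 0)))
    (hray : ∃ θ : ℝ, Tendsto (fun r : ℝ => f (r * Complex.exp (θ * Complex.I)) /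
      g (r * Complex.exp (θ * Complex.I))) atTop (nhds 1)) :
    f = g := by
  have hord : ∀ z, analyticOrderAt f z = analyticOrderAt g z := fun z =>
    analyticOrderAt_eq_of_forall_iteratedDeriv_eq_zero_iff (hf.analyticAt z) (hg.analyticAt z)
      (hzeros z)
  obtain ⟨p, -, hfp⟩ := exists_polynomial_eq_exp_mul hf hg hg0 hftype hgtype hord
  obtain ⟨θ, hθ⟩ := hray
  have hexp : Tendsto (fun r : ℝ => Complex.exp (p.eval (r * Complex.exp (θ * Complex.I)))) atTop
      (𝓝 1) := by
    refine hθ.congr' ((hθ.eventually_ne one_ne_zero).mono fun r hr => ?_)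
    rw [hfp, mul_div_cancel_right₀ _ (div_ne_zero_iff.mp hr).2]
  obtain ⟨a, rfl⟩ := natDegree_eq_zero.mp
    (natDegree_eq_zero_of_tendsto_exp_eval (Complex.exp_ne_zero _) one_ne_zero hexp)
  simp only [eval_C, tendsto_const_nhds_iff] at hexp
  exact funext fun z => by rw [hfp, eval_C, hexp, one_mul]

/-- If two entire functions of exponential type at most 1 have exactly the same zeros
(with multiplicities, expressed via vanishing of iterated derivatives), neither identically
zero, and their ratio tends to 1 along some ray to infinity, then they are equal. -/
theorem stmt0 (f g : ℂ → ℂ)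
    (hf : Differentiable ℂ f) (hg : Differentiable ℂ g)
    (hf0 : f ≠ 0) (hg0 : g ≠ 0)
    (hftype : ∃ C A : ℝ, ∀ z : ℂ, ‖f z‖ ≤ C * Real.exp (A * ‖z‖))
    (hgtype : ∃ C A : ℝ, ∀ z : ℂ, ‖g z‖ ≤ C * Real.exp (A * ‖z‖))
    (hzeros : ∀ z : ℂ, ∀ n : ℕ,
      ((∀ k ≤ n, iteratedDeriv k f z = 0) ↔ (∀ k ≤ n, iteratedDeriv k g z = 0)))
    (hray : ∃ θ : ℝ, Tendsto (fun r : ℝ => f (r * Complex.exp (θ * Complex.I)) /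
      g (r * Complex.exp (θ * Complex.I))) atTop (nhds 1)) :
    f = g :=
  stmt0_general f g 1 hf hg hg0 (by simpa only [pow_one] using hftype)
    (by simpa only [pow_one] using hgtype) hzeros hray
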